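/- arXiv:1110.4794 — 3 statements merged into one kernel-verified Lean document; each statement's English description precedes it below -/
import Mathlib

section
/- The improper integral G₁(x) = lim_{R→∞} ∫_x^R e^{iσ²} dσ converges for every x ∈ ℝ, and there is a constant C such that: for all x ≥ 1, |G₁(x) + e^{ix²}/(2ix)| ≤ C/x², and for all x ≤ −1, |G₁(x) − C₀| ≤ C/|x|, where C₀ = lim_{R→∞} ∫_{−R}^R e^{iσ²} dσ. -/
open Filter

namespace FresnelAux

/-- the integrand -/
noncomputable def f (s : ℝ) : ℂ := Complex.exp (Complex.I * ((s^2 : ℝ) : ℂ))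

/-- approximate primitive -/
noncomputable def H (s : ℝ) : ℂ := f s / (2 * Complex.I * (s : ℂ)) - f s / (4 * (s : ℂ)^3)

lemma f_cont : Continuous f := by unfold f; fun_prop

lemma f_norm (s : ℝ) : ‖f s‖ = 1 := by
  unfold f; rw [mul_comm]; exact Complex.norm_exp_ofReal_mul_I _

lemma f_int (a b : ℝ) : IntervalIntegrable f MeasureTheory.volume a b :=
  f_cont.intervalIntegrable a b

lemma f_deriv (s : ℝ) : HasDerivAt f (2 * Complex.I * s * f s) s := by
  have h0 : HasDerivAt (fun t : ℝ => (t : ℂ)) 1 s := Complex.ofRealCLM.hasDerivAt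
  have h1 := ((h0.pow 2).const_mul Complex.I).cexp
  have : f = fun t : ℝ => Complex.exp (Complex.I * ((t : ℂ)^2)) := by
    funext t; simp [f]
  rw [this]
  refine h1.congr_deriv ?_
  simp only [Pi.pow_apply]
  push_cast
  ring

lemma H_deriv (s : ℝ) (hs : s ≠ 0) :
    HasDerivAt H (f s + (3/4) * f s / (s : ℂ)^4) s := by
  have h0 : HasDerivAt (fun t : ℝ => (t : ℂ)) 1 s := Complex.ofRealCLM.hasDerivAt
  have hs' : (s : ℂ) ≠ 0 := by exact_mod_cast hs
  have h1 := (f_deriv s).div (h0.const_mul (2 * Complex.I)) (by simp [hs'])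
  have h2 := (f_deriv s).div ((h0.pow 3).const_mul (4 : ℂ)) (by simp [hs'])
  have h3 := h1.sub h2
  refine h3.congr_deriv ?_
  have hI : Complex.I ≠ 0 := Complex.I_ne_zero
  simp
  field_simp
  ring_nf
  simp [Complex.I_sq]
  try ring

lemma H_norm_sub (s : ℝ) (hs : 1 ≤ s) : ‖f s / (4 * (s : ℂ)^3)‖ ≤ 1 / (4 * s^3) := by
  simp [f_norm, abs_of_pos (show (0:ℝ) < s by linarith)]

lemma H_norm_main (s : ℝ) (hs : 1 ≤ s) : ‖f s / (2 * Complex.I * (s : ℂ))‖ ≤ 1 / (2 * s) := by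
  simp [f_norm, abs_of_pos (show (0:ℝ) < s by linarith)]

lemma H_norm (s : ℝ) (hs : 1 ≤ s) : ‖H s‖ ≤ 1 / s := by
  have h1 := H_norm_sub s hs
  have h2 := H_norm_main s hs
  have h3 : 1 / (4 * s^3) ≤ 1 / (2 * s) := by
    apply one_div_le_one_div_of_le (by linarith)
    nlinarith [sq_nonneg s, mul_nonneg (show (0:ℝ) ≤ s by linarith) (show 0 ≤ s^2 - 1 by nlinarith)]
  have h4 : 1 / s = 1 / (2*s) + 1/(2*s) := by field_simp; norm_num
  unfold H
  refine (norm_sub_le _ _).trans ?_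
  linarith

lemma H_tendsto : Tendsto H atTop (nhds 0) := by
  apply squeeze_zero_norm' (a := fun s : ℝ => 1 / s)
  · filter_upwards [eventually_ge_atTop 1] with s hs using H_norm s hs
  · simpa using tendsto_inv_atTop_zero (𝕜 := ℝ)

lemma rem_bound (x R : ℝ) (hx : 1 ≤ x) (hR : x ≤ R) :
    ‖(∫ s in x..R, f s) - (H R - H x)‖ ≤ 1 / (4 * x^3) := by
  have hpos : ∀ s ∈ Set.uIcc x R, 0 < s := by
    intro s hs
    rw [Set.uIcc_of_le hR] at hs
    linarith [hs.1]
  have hc : ContinuousOn (fun s : ℝ => (3/4) * f s / (s : ℂ)^4) (Set.uIcc x R) := by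
    apply ContinuousOn.div
    · exact (continuous_const.mul f_cont).continuousOn
    · fun_prop
    · intro s hs
      have := (hpos s hs).ne'
      simpa using this
  have hI : IntervalIntegrable (fun s : ℝ => (3/4) * f s / (s : ℂ)^4) MeasureTheory.volume x R :=
    hc.intervalIntegrable
  have hF : ∫ s in x..R, (f s + (3/4) * f s / (s : ℂ)^4) = H R - H x :=
    intervalIntegral.integral_eq_sub_of_hasDerivAt
      (fun s hs => H_deriv s (hpos s hs).ne') ((f_int x R).add hI)
  rw [← hF, intervalIntegral.integral_add (f_int x R) hI, sub_add_cancel_left, norm_neg]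
  have hc2 : ContinuousOn (fun s : ℝ => (3/4) / s^4) (Set.uIcc x R) := by
    apply ContinuousOn.div
    · fun_prop
    · fun_prop
    · intro s hs
      have := hpos s hs
      positivity
  have hG : ∫ s in x..R, (3/4) / s^4 = - (1 / (4 * R^3)) - (-(1 / (4 * x^3))) := by
    refine intervalIntegral.integral_eq_sub_of_hasDerivAt (f := fun s : ℝ => -(1/(4 * s^3)))
      (fun s hs => ?_) hc2.intervalIntegrable
    have h := hpos s hs
    have h1 := ((hasDerivAt_const s (1:ℝ)).div (((hasDerivAt_id s).pow 3).const_mul (4:ℝ))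
      (by simp [h.ne'])).neg
    refine h1.congr_deriv ?_
    simp
    field_simp
    try norm_num
  refine (intervalIntegral.norm_integral_le_of_norm_le (g := fun s : ℝ => (3/4) / s^4) hR
    (Eventually.of_forall fun s hs => ?_) hc2.intervalIntegrable).trans ?_
  · simp [f_norm, abs_of_pos (show (0:ℝ) < s by linarith [hs.1])]
  · rw [hG]
    have : 0 ≤ 1 / (4 * R^3) := by
      have : 0 < R := by linarith
      positivity
    linarith

lemma int_bound (x R : ℝ) (hx : 1 ≤ x) (hR : x ≤ R) : ‖∫ s in x..R, f s‖ ≤ 3 / x := by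
  have h1 := rem_bound x R hx hR
  have h2 := H_norm x hx
  have h3 := H_norm R (hx.trans hR)
  have h4 : 1 / R ≤ 1 / x := one_div_le_one_div_of_le (by linarith) hR
  have h5 : 1 / (4 * x^3) ≤ 1 / x := by
    apply one_div_le_one_div_of_le (by linarith)
    nlinarith [sq_nonneg x, mul_nonneg (show (0:ℝ) ≤ x by linarith) (show 0 ≤ x^2 - 1 by nlinarith)]
  have h6 : (∫ s in x..R, f s) = ((∫ s in x..R, f s) - (H R - H x)) + (H R - H x) := by ring
  rw [h6]
  refine (norm_add_le _ _).trans ?_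
  have := norm_sub_le (H R) (H x)
  have h7 : 3 / x = 1/x + 1/x + 1/x := by ring
  linarith

lemma conv0 : ∃ L, Tendsto (fun R : ℝ => ∫ s in (0:ℝ)..R, f s) atTop (nhds L) := by
  apply cauchy_map_iff_exists_tendsto.mp
  rw [Metric.cauchy_iff]
  refine ⟨inferInstance, fun ε hε => ?_⟩
  have hN : ∃ N : ℝ, 1 ≤ N ∧ 3 / N < ε := by
    refine ⟨max 1 (3/ε + 1), le_max_left _ _, ?_⟩
    rw [div_lt_iff₀ (by positivity), ← div_lt_iff₀' hε]
    exact (lt_add_one _).trans_le (le_max_right _ _)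
  obtain ⟨N, hN1, hN⟩ := hN
  have key : ∀ a b : ℝ, N ≤ a → a ≤ b →
      dist (∫ s in (0:ℝ)..a, f s) (∫ s in (0:ℝ)..b, f s) < ε := by
    intro a b ha hab
    rw [dist_comm, dist_eq_norm, intervalIntegral.integral_interval_sub_left (f_int _ _) (f_int _ _)]
    refine (int_bound a b (hN1.trans ha) hab).trans_lt (lt_of_le_of_lt ?_ hN)
    exact div_le_div_of_nonneg_left (by norm_num) (by linarith) ha
  refine ⟨_, image_mem_map (Ici_mem_atTop N), ?_⟩
  rintro _ ⟨a, ha, rfl⟩ _ ⟨b, hb, rfl⟩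
  rcases le_total a b with h | h
  · exact key a b ha h
  · rw [dist_comm]; exact key b a hb h

lemma even_int (y : ℝ) : ∫ s in (-y)..0, f s = ∫ s in (0:ℝ)..y, f s := by
  have h := intervalIntegral.integral_comp_neg (a := 0) (b := y) f
  rw [neg_zero] at h
  rw [← h]
  congr 1
  funext s
  simp [f]

end FresnelAux

open FresnelAux

/-- The improper Fresnel-type integral `G₁(x) = ∫_x^∞ e^{iσ²} dσ` converges for every
`x`, and satisfies `G₁(x) = -e^{ix²}/(2ix) + O(1/x²)` as `x → ∞` and
`G₁(x) = C₀ + O(1/|x|)` as `x → -∞`, where `C₀ = ∫_{-∞}^∞ e^{iσ²} dσ`. -/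
theorem fresnel_G1_asymptotics :
    ∃ (G₁ : ℝ → ℂ) (C₀ : ℂ),
      (∀ x : ℝ, Tendsto (fun R : ℝ => ∫ σ in x..R, Complex.exp (Complex.I * ((σ^2 : ℝ) : ℂ)))
        atTop (nhds (G₁ x))) ∧
      Tendsto (fun R : ℝ => ∫ σ in (-R)..R, Complex.exp (Complex.I * ((σ^2 : ℝ) : ℂ)))
        atTop (nhds C₀) ∧
      ∃ C : ℝ, (∀ x : ℝ, 1 ≤ x →
          ‖G₁ x + Complex.exp (Complex.I * ((x^2 : ℝ) : ℂ)) / (2 * Complex.I * (x : ℂ))‖ ≤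
            C / x^2) ∧
        (∀ x : ℝ, x ≤ -1 → ‖G₁ x - C₀‖ ≤ C / |x|) := by
  change ∃ (G₁ : ℝ → ℂ) (C₀ : ℂ),
      (∀ x : ℝ, Tendsto (fun R : ℝ => ∫ σ in x..R, FresnelAux.f σ) atTop (nhds (G₁ x))) ∧
      Tendsto (fun R : ℝ => ∫ σ in (-R)..R, FresnelAux.f σ) atTop (nhds C₀) ∧
      ∃ C : ℝ, (∀ x : ℝ, 1 ≤ x →
          ‖G₁ x + FresnelAux.f x / (2 * Complex.I * (x : ℂ))‖ ≤ C / x^2) ∧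
        (∀ x : ℝ, x ≤ -1 → ‖G₁ x - C₀‖ ≤ C / |x|)

  obtain ⟨L, hL⟩ := conv0
  have hG : ∀ x : ℝ, Tendsto (fun R : ℝ => ∫ σ in x..R, f σ) atTop
      (nhds (L - ∫ s in (0:ℝ)..x, f s)) := by
    intro x
    refine (hL.sub_const _).congr fun R => ?_
    exact intervalIntegral.integral_interval_sub_left (f_int _ _) (f_int _ _)
  refine ⟨fun x => L - ∫ s in (0:ℝ)..x, f s, L + L, hG, ?_, 3, ?_, ?_⟩
  · refine (hL.add hL).congr fun R => ?_
    rw [← intervalIntegral.integral_add_adjacent_intervals (f_int (-R) 0) (f_int 0 R), even_int]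
  · intro x hx
    have h1 : ‖(L - ∫ s in (0:ℝ)..x, f s) - (0 - H x)‖ ≤ 1 / (4 * x^3) := by
      refine le_of_tendsto ((hG x).sub (H_tendsto.sub_const (H x))).norm ?_
      filter_upwards [eventually_ge_atTop x] with R hR using rem_bound x R hx hR
    have h2 := H_norm_sub x hx
    have h3 : 1 / (4 * x^3) ≤ 1 / x^2 := by
      apply one_div_le_one_div_of_le (by positivity)
      nlinarith [mul_nonneg (sq_nonneg x) (show 0 ≤ x - 1 by linarith), sq_nonneg x]
    have h4 : (L - ∫ s in (0:ℝ)..x, f s) + f x / (2 * Complex.I * (x : ℂ)) =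
        ((L - ∫ s in (0:ℝ)..x, f s) - (0 - H x)) + f x / (4 * (x : ℂ)^3) := by
      unfold H; ring
    change ‖(L - ∫ s in (0:ℝ)..x, f s) + f x / (2 * Complex.I * (x : ℂ))‖ ≤ _
    rw [h4]
    refine (norm_add_le _ _).trans ?_
    have h5 : 3 / x^2 = 1 / x^2 + 1/x^2 + 1/x^2 := by ring
    have h6 : 0 ≤ 1 / x^2 := by positivity
    linarith
  · intro x hx
    have h1 : ‖L - ∫ s in (0:ℝ)..(-x), f s‖ ≤ 3 / (-x) := by
      refine le_of_tendsto (hG (-x)).norm ?_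
      filter_upwards [eventually_ge_atTop (-x)] with R hR
        using int_bound (-x) R (by linarith) hR
    have h2 := even_int (-x)
    rw [neg_neg, intervalIntegral.integral_symm] at h2
    rw [abs_of_neg (by linarith)]
    refine le_trans (le_of_eq ?_) h1
    rw [← h2, ← norm_neg]
    congr 1
    ring
end

section
/- Let χ : ℝ → ℂ be a smooth compactly supported function. Then there is a constant C (depending on χ) such that for all t ≥ 1, | ∫_0^∞ e^{itσ} χ(σ) σ^{−1/2} dσ − C₀ χ(0) t^{−1/2} | ≤ C/t, where C₀ = lim_{R→∞} ∫_{−R}^R e^{iσ²} dσ. -/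
open Filter MeasureTheory

noncomputable def fresE (s : ℝ) : ℂ := Complex.exp (Complex.I * ((s^2 : ℝ) : ℂ))

lemma fresE_cont : Continuous fresE := by unfold fresE; fun_prop

lemma fresE_norm (s : ℝ) : ‖fresE s‖ = 1 := by
  unfold fresE; rw [mul_comm]; exact Complex.norm_exp_ofReal_mul_I _

noncomputable def fresF (x : ℝ) : ℂ := ∫ s in (0:ℝ)..x, fresE s

lemma fresF_deriv (x : ℝ) : HasDerivAt fresF (fresE x) x :=
  intervalIntegral.integral_hasDerivAt_right (fresE_cont.intervalIntegrable _ _)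
    (fresE_cont.stronglyMeasurableAtFilter _ _) fresE_cont.continuousAt

lemma fresE_deriv (x : ℝ) : HasDerivAt fresE (fresE x * (Complex.I * (2 * x))) x := by
  have h1 : HasDerivAt (fun s : ℝ => ((s^2 : ℝ) : ℂ)) (((2 * x : ℝ)) : ℂ) x := by
    have := (hasDerivAt_pow 2 x).ofReal_comp
    simpa using this
  have := (h1.const_mul Complex.I).cexp
  refine HasDerivAt.congr_deriv (f := fresE) this ?_
  simp [fresE]

noncomputable def fresH (x : ℝ) : ℂ := fresF x - fresE x / (2 * Complex.I * x)

lemma fresH_deriv {x : ℝ} (hx : 0 < x) :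
    HasDerivAt fresH (fresE x / (2 * Complex.I * x ^ 2)) x := by
  have hx' : (x : ℂ) ≠ 0 := by exact_mod_cast hx.ne'
  have h1 : HasDerivAt (fun s : ℝ => 2 * Complex.I * (s : ℂ)) (2 * Complex.I * 1) x :=
    ((hasDerivAt_id x).ofReal_comp).const_mul _
  have := (fresF_deriv x).sub ((fresE_deriv x).div h1 (by simp [hx']))
  refine this.congr_deriv ?_
  have := Complex.I_ne_zero
  field_simp
  ring

lemma fresH_deriv_norm (x : ℝ) (hx : 0 < x) :
    ‖fresE x / (2 * Complex.I * x ^ 2)‖ = 2⁻¹ * x ^ (-2 : ℝ) := by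
  rw [norm_div, fresE_norm]
  simp only [norm_mul, norm_pow, Complex.norm_I, Complex.norm_real, Real.norm_eq_abs, sq_abs]
  rw [Real.rpow_neg hx.le]
  norm_num
  ring

lemma fres_int {x : ℝ} (hx : 0 < x) :
    IntegrableOn (fun x : ℝ => fresE x / (2 * Complex.I * x ^ 2)) (Set.Ioi x) := by
  have h : IntegrableOn (fun x : ℝ => 2⁻¹ * x ^ (-2 : ℝ)) (Set.Ioi x) :=
    (integrableOn_Ioi_rpow_of_lt (by norm_num) hx).const_mul _
  refine Integrable.mono' h ?_ ?_
  · refine ContinuousOn.aestronglyMeasurable ?_ measurableSet_Ioi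
    refine ContinuousOn.div fresE_cont.continuousOn (by fun_prop) ?_
    intro y hy
    have : (y : ℂ) ≠ 0 := by exact_mod_cast (hx.trans hy).ne'
    simp [this]
  · refine (ae_restrict_iff' measurableSet_Ioi).2 (Eventually.of_forall fun y hy => ?_)
    exact (fresH_deriv_norm y (hx.trans hy)).le

lemma fres_small : Tendsto (fun x : ℝ => fresE x / (2 * Complex.I * x)) atTop (nhds 0) := by
  refine squeeze_zero_norm' (a := fun x : ℝ => x⁻¹) ?_ tendsto_inv_atTop_zero
  filter_upwards [eventually_gt_atTop 0] with x hx
  rw [norm_div, fresE_norm]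
  simp only [norm_mul, Complex.norm_I, Complex.norm_real, Real.norm_eq_abs, abs_of_pos hx]
  rw [← one_div]
  norm_num
  nlinarith [inv_pos.2 hx]

lemma fres_lim : ∃ L : ℂ, Tendsto fresF atTop (nhds L) ∧ ∀ x : ℝ, 0 < x → ‖fresF x - L‖ ≤ 1 / x := by
  have hl := tendsto_limUnder_of_hasDerivAt_of_integrableOn_Ioi (a := 1) (f := fresH)
    (fun x hx => fresH_deriv (lt_trans one_pos hx)) (fres_int one_pos)
  set L := limUnder atTop fresH
  refine ⟨L, ?_, ?_⟩
  · have := hl.add fres_small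
    simpa [fresH] using this
  · intro x hx
    have h := integral_Ioi_of_hasDerivAt_of_tendsto (fresH_deriv hx).continuousAt.continuousWithinAt
      (fun y hy => fresH_deriv (hx.trans hy)) (fres_int hx) hl
    have hn : ‖L - fresH x‖ ≤ 1 / (2 * x) := by
      rw [← h]
      refine (norm_integral_le_integral_norm _).trans ?_
      rw [setIntegral_congr_fun measurableSet_Ioi
        (fun y hy => fresH_deriv_norm y (hx.trans hy)), integral_const_mul,
        integral_Ioi_rpow_of_lt (by norm_num) hx]
      norm_num [Real.rpow_neg_one]
      exact le_of_eq (by ring)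
    have hm : ‖fresE x / (2 * Complex.I * x)‖ = 1 / (2 * x) := by
      rw [norm_div, fresE_norm]
      simp [abs_of_pos hx]
    have : fresF x - L = fresE x / (2 * Complex.I * x) - (L - fresH x) := by
      unfold fresH; ring
    rw [this]
    refine (norm_sub_le _ _).trans ?_
    rw [hm]
    have : 1 / x = 1 / (2 * x) + 1 / (2 * x) := by field_simp; ring
    linarith

lemma int_div_sqrt (g : ℝ → ℂ) (hg : Continuous g) (hs : HasCompactSupport g) :
    IntegrableOn (fun σ => g σ / ((Real.sqrt σ : ℝ) : ℂ)) (Set.Ioi 0) := by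
  obtain ⟨B, hB⟩ := hs.exists_bound_of_continuous hg
  obtain ⟨M, hM⟩ := hs.isCompact.isBounded.subset_closedBall 0
  have h1 : IntegrableOn (fun σ : ℝ => σ ^ (-(1/2) : ℝ)) (Set.Ioc 0 (max M 0)) := by
    rw [← intervalIntegrable_iff_integrableOn_Ioc_of_le (le_max_right _ _)]
    exact intervalIntegral.intervalIntegrable_rpow' (by norm_num)
  have h2 : IntegrableOn (fun σ => g σ / ((Real.sqrt σ : ℝ) : ℂ)) (Set.Ioc 0 (max M 0)) := by
    refine Integrable.mono' (h1.const_mul B) ?_ ?_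
    · refine Measurable.aestronglyMeasurable ?_
      have := hg.measurable
      fun_prop
    · refine (ae_restrict_iff' measurableSet_Ioc).2 (Eventually.of_forall fun y hy => ?_)
      rw [norm_div, Complex.norm_real, Real.norm_eq_abs, abs_of_nonneg (Real.sqrt_nonneg _),
        Real.rpow_neg hy.1.le, ← Real.sqrt_eq_rpow, div_eq_mul_inv]
      gcongr
      exact hB y
  refine h2.of_forall_sdiff_eq_zero measurableSet_Ioi ?_
  intro y hy
  have : g y = 0 := by
    by_contra h
    have h3 := hM (subset_tsupport _ h)
    simp only [Metric.mem_closedBall, dist_zero_right, Real.norm_eq_abs] at h3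
    exact hy.2 ⟨hy.1, ((le_abs_self y).trans h3).trans (le_max_left _ _)⟩
  simp [this]

/-- For a smooth compactly supported `χ`,
`∫_0^∞ e^{itσ} χ(σ) σ^{-1/2} dσ = C₀ χ(0) t^{-1/2} + O(1/t)` as `t → ∞`,
where `C₀ = ∫_{-∞}^∞ e^{iσ²} dσ`. -/
theorem oscillatory_integral_sqrt_singularity (χ : ℝ → ℂ)
    (hχ : ContDiff ℝ (⊤ : ℕ∞) χ) (hχsupp : HasCompactSupport χ) :
    ∃ C₀ : ℂ,
      Tendsto (fun R : ℝ => ∫ σ in (-R)..R, Complex.exp (Complex.I * ((σ^2 : ℝ) : ℂ)))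
        atTop (nhds C₀) ∧
      ∃ C : ℝ, ∀ t : ℝ, 1 ≤ t →
        ‖(∫ σ in Set.Ioi (0:ℝ),
            Complex.exp (Complex.I * ((t * σ : ℝ) : ℂ)) * χ σ / ((Real.sqrt σ : ℝ) : ℂ)) -
          C₀ * χ 0 / ((Real.sqrt t : ℝ) : ℂ)‖ ≤ C / t := by
  obtain ⟨L, hL, hLb⟩ := fres_lim
  refine ⟨2 * L, ?_, ?_⟩
  · have : (fun R : ℝ => ∫ σ in (-R)..R, Complex.exp (Complex.I * ((σ^2 : ℝ) : ℂ))) =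
        fun R => 2 * fresF R := by
      funext R
      change (∫ σ in (-R)..R, fresE σ) = _
      rw [← intervalIntegral.integral_add_adjacent_intervals (b := 0)
        (fresE_cont.intervalIntegrable _ _) (fresE_cont.intervalIntegrable _ _)]
      have h : (∫ σ in (-R)..0, fresE σ) = ∫ σ in (0:ℝ)..R, fresE σ := by
        have := intervalIntegral.integral_comp_neg (a := 0) (b := R) fresE
        rw [neg_zero] at this
        rw [← this]
        congr 1
        funext s
        simp [fresE]
      rw [h, fresF]; ring
    rw [this]
    exact hL.const_mul 2
  have hd : Continuous (deriv χ) := hχ.continuous_deriv (by simp)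
  have hds : HasCompactSupport (deriv χ) := hχsupp.deriv
  have hchi (x : ℝ) : HasDerivAt χ (deriv χ x) x :=
    ((hχ.differentiable (by simp)) x).hasDerivAt
  refine ⟨2 * ∫ σ in Set.Ioi (0:ℝ), ‖deriv χ σ / ((Real.sqrt σ : ℝ) : ℂ)‖, ?_⟩
  intro t ht
  have t0 : 0 < t := by linarith
  have st0 : 0 < Real.sqrt t := Real.sqrt_pos.2 t0
  have stc : ((Real.sqrt t : ℝ) : ℂ) ≠ 0 := by exact_mod_cast st0.ne'
  set G : ℝ → ℂ := fun σ => 2 / ((Real.sqrt t : ℝ) : ℂ) * (fresF (Real.sqrt t * Real.sqrt σ) - L)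
    with hG
  have hFc : Continuous fresF :=
    continuous_iff_continuousAt.2 fun x => (fresF_deriv x).continuousAt
  have hGc : Continuous G := by
    have : Continuous fun σ => fresF (Real.sqrt t * Real.sqrt σ) := hFc.comp (by fun_prop)
    fun_prop
  have hGd (σ : ℝ) (hσ : 0 < σ) : HasDerivAt G
      (Complex.exp (Complex.I * ((t * σ : ℝ) : ℂ)) / ((Real.sqrt σ : ℝ) : ℂ)) σ := by
    have ss0 : 0 < Real.sqrt σ := Real.sqrt_pos.2 hσ
    have ssc : ((Real.sqrt σ : ℝ) : ℂ) ≠ 0 := by exact_mod_cast ss0.ne'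
    have h1 := ((Real.hasDerivAt_sqrt hσ.ne').const_mul (Real.sqrt t))
    have h2 := (((fresF_deriv _).scomp σ h1).sub_const L).const_mul (2 / ((Real.sqrt t : ℝ) : ℂ))
    refine h2.congr_deriv ?_
    have : fresE (Real.sqrt t * Real.sqrt σ) = Complex.exp (Complex.I * ((t * σ : ℝ) : ℂ)) := by
      unfold fresE
      rw [mul_pow, Real.sq_sqrt t0.le, Real.sq_sqrt hσ.le]
    rw [this, Complex.real_smul]
    push_cast
    field_simp
  have hGb (σ : ℝ) (hσ : 0 < σ) : ‖G σ‖ ≤ 2 / (t * Real.sqrt σ) := by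
    have ss0 : 0 < Real.sqrt σ := Real.sqrt_pos.2 hσ
    rw [hG]
    simp only [norm_mul, norm_div, Complex.norm_real, Real.norm_eq_abs, abs_of_pos st0]
    calc _ ≤ ‖(2:ℂ)‖ / Real.sqrt t * (1 / (Real.sqrt t * Real.sqrt σ)) := by
          gcongr
          exact hLb _ (by positivity)
      _ = 2 / ((Real.sqrt t * Real.sqrt t) * Real.sqrt σ) := by
          norm_num; field_simp
      _ = _ := by rw [Real.mul_self_sqrt t0.le]
  have hi1 : IntegrableOn (fun σ => Complex.exp (Complex.I * ((t * σ : ℝ) : ℂ)) * χ σ /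
      ((Real.sqrt σ : ℝ) : ℂ)) (Set.Ioi 0) := by
    refine int_div_sqrt (fun σ => Complex.exp (Complex.I * ((t * σ : ℝ) : ℂ)) * χ σ) ?_ ?_
    · have := hχ.continuous
      fun_prop
    · exact hχsupp.mul_left
  have hi2 : IntegrableOn (fun σ => G σ * deriv χ σ) (Set.Ioi 0) :=
    ((hGc.mul hd).integrable_of_hasCompactSupport hds.mul_left).integrableOn
  have hz : Tendsto (fun σ => G σ * χ σ) atTop (nhds 0) := by
    have hcs : HasCompactSupport (fun σ => G σ * χ σ) := hχsupp.mul_left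
    have := hcs.is_zero_at_infty
    exact this.mono_left atTop_le_cocompact
  have key := integral_Ioi_of_hasDerivAt_of_tendsto (a := 0) (f := fun σ => G σ * χ σ)
    (f' := fun σ => Complex.exp (Complex.I * ((t * σ : ℝ) : ℂ)) * χ σ / ((Real.sqrt σ : ℝ) : ℂ)
      + G σ * deriv χ σ)
    (hGc.mul hχ.continuous).continuousWithinAt
    (fun σ hσ => ((hGd σ hσ).mul (hchi σ)).congr_deriv (by ring)) (hi1.add hi2) hz
  rw [integral_add hi1 hi2] at key
  have hG0 : G 0 = - (2 * L / ((Real.sqrt t : ℝ) : ℂ)) := by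
    simp [hG, fresF]; ring
  have e : (∫ σ in Set.Ioi (0:ℝ),
            Complex.exp (Complex.I * ((t * σ : ℝ) : ℂ)) * χ σ / ((Real.sqrt σ : ℝ) : ℂ)) -
          2 * L * χ 0 / ((Real.sqrt t : ℝ) : ℂ) = - ∫ σ in Set.Ioi (0:ℝ), G σ * deriv χ σ := by
    rw [hG0] at key
    linear_combination key
  rw [e, norm_neg]
  refine (norm_integral_le_integral_norm _).trans ?_
  rw [mul_div_right_comm, ← integral_const_mul]
  refine setIntegral_mono_on hi2.norm ((int_div_sqrt _ hd hds).norm.const_mul _)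
    measurableSet_Ioi ?_
  intro σ hσ
  rw [norm_mul, norm_div, Complex.norm_real, Real.norm_eq_abs, abs_of_nonneg (Real.sqrt_nonneg _)]
  calc _ ≤ 2 / (t * Real.sqrt σ) * ‖deriv χ σ‖ := by
        gcongr
        exact hGb σ hσ
    _ = _ := by
        have ss0 : 0 < Real.sqrt σ := Real.sqrt_pos.2 hσ
        field_simp
end

section
/- Let χ : ℝ → ℂ be a smooth compactly supported function. Then there is a constant C (depending only on χ) such that for all t ≥ 1 and all ε ∈ ℝ: | ∫_ε^∞ e^{itσ²} χ(σ) (σ−ε)^{−1/2} dσ − χ(0) t^{−1/4} G₂(√t ε) | ≤ C t^{−3/4} if |√t ε| < 1, and | ∫_ε^∞ e^{itσ²} χ(σ) (σ−ε)^{−1/2} dσ − χ(0) t^{−1/4} G₂(√t ε) | ≤ C (|ε|/t)^{1/2} if |√t ε| > 1. Here the integral ∫_ε^∞ is understood as the improper integral lim_{R→∞} ∫_ε^R. -/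
open Filter MeasureTheory

open Set

lemma osc_ibp {a b M : ℝ} (hab : a ≤ b) (E E' u : ℝ → ℂ) (w w' k : ℝ → ℝ)
    (hE : ∀ x, HasDerivAt E (E' x) x) (hE'c : Continuous E') (hE1 : ∀ x, ‖E x‖ ≤ 1)
    (huc : ContinuousOn u (Icc a b)) (hud : ∀ x ∈ Ioo a b, x ≠ 0 → DifferentiableAt ℝ u x)
    (huM : ∀ x ∈ Icc a b, ‖u x‖ ≤ M)
    (hk : ContinuousOn k (Icc a b)) (huk : ∀ x ∈ Ioo a b, x ≠ 0 → ‖deriv u x‖ ≤ k x)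
    (hk0 : ∀ x ∈ Icc a b, 0 ≤ k x)
    (hkM : ∫ x in a..b, k x ≤ M)
    (hw : ∀ x ∈ Icc a b, HasDerivAt w (w' x) x) (hw'c : ContinuousOn w' (Icc a b))
    (hw' : ∀ x ∈ Icc a b, w' x ≤ 0) (hw0 : ∀ x ∈ Icc a b, 0 ≤ w x) :
    ‖∫ x in a..b, E' x * u x * (w x : ℂ)‖ ≤ 4 * M * w a := by
  have hM : 0 ≤ M := le_trans (norm_nonneg _) (huM a ⟨le_rfl, hab⟩)
  have hEc : Continuous E := continuous_iff_continuousAt.2 fun x => (hE x).continuousAt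
  have hwc : ContinuousOn w (Icc a b) := fun x hx => (hw x hx).continuousAt.continuousWithinAt
  have hwC : ContinuousOn (fun x => (w x : ℂ)) (Icc a b) :=
    Complex.continuous_ofReal.comp_continuousOn hwc
  have hw'C : ContinuousOn (fun x => (w' x : ℂ)) (Icc a b) :=
    Complex.continuous_ofReal.comp_continuousOn hw'c
  have hui : uIcc a b = Icc a b := uIcc_of_le hab
  have hanti : AntitoneOn w (Icc a b) := by
    apply antitoneOn_of_deriv_nonpos (convex_Icc a b) hwc
    · intro x hx
      rw [interior_Icc] at hx
      exact (hw x (Ioo_subset_Icc_self hx)).differentiableAt.differentiableWithinAt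
    · intro x hx
      rw [interior_Icc] at hx
      rw [(hw x (Ioo_subset_Icc_self hx)).deriv]
      exact hw' x (Ioo_subset_Icc_self hx)
  have hwa : ∀ x ∈ Icc a b, w x ≤ w a := fun x hx => hanti ⟨le_rfl, hab⟩ hx hx.1
  have ae1 : ∀ᵐ x : ℝ, x ∈ Ioc a b → ‖deriv u x‖ ≤ k x := by
    have h0 : ∀ᵐ x : ℝ, x ≠ 0 := by simp [ae_iff, measure_singleton]
    have hb : ∀ᵐ x : ℝ, x ≠ b := by simp [ae_iff, measure_singleton]
    filter_upwards [h0, hb] with x hx0 hxb hx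
    exact huk x ⟨hx.1, lt_of_le_of_ne hx.2 hxb⟩ hx0
  have hdu : IntervalIntegrable (deriv u) volume a b := by
    have : IntervalIntegrable k volume a b := ContinuousOn.intervalIntegrable (by rwa [hui])
    refine this.mono_fun' (stronglyMeasurable_deriv u).aestronglyMeasurable ?_
    rw [uIoc_of_le hab]
    exact (ae_restrict_iff' measurableSet_Ioc).2 ae1
  have hI1 : IntervalIntegrable (fun x => E' x * u x * (w x : ℂ)) volume a b := by
    apply ContinuousOn.intervalIntegrable
    rw [hui]
    exact (hE'c.continuousOn.mul huc).mul hwC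
  have hI2 : IntervalIntegrable (fun x => deriv u x * (E x * (w x : ℂ)) ) volume a b := by
    apply hdu.mul_continuousOn
    rw [hui]
    exact hEc.continuousOn.mul hwC
  have hI3 : IntervalIntegrable (fun x => E x * u x * (w' x : ℂ)) volume a b := by
    apply ContinuousOn.intervalIntegrable
    rw [hui]
    exact (hEc.continuousOn.mul huc).mul hw'C
  have key := integral_eq_of_hasDerivAt_off_countable (fun x => E x * u x * (w x : ℂ))
    (fun x => E' x * u x * (w x : ℂ) + (deriv u x * (E x * (w x : ℂ)) + E x * u x * (w' x : ℂ)))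
    (a := a) (b := b) (s := {0}) (countable_singleton 0)
    (by rw [hui]; exact (hEc.continuousOn.mul huc).mul hwC)
    (by
      rintro x ⟨hx, hx0⟩
      rw [min_eq_left hab, max_eq_right hab] at hx
      have h1 := (hud x hx hx0).hasDerivAt
      have h2 := (hw x (Ioo_subset_Icc_self hx)).ofReal_comp
      exact (((hE x).mul h1).mul h2).congr_deriv (by simp only [Pi.mul_apply]; ring))
    (hI1.add (hI2.add hI3))
  rw [intervalIntegral.integral_add hI1 (hI2.add hI3)] at key
  have hI4 : IntervalIntegrable (fun x => k x * w a + M * (- w' x)) volume a b := by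
    apply ContinuousOn.intervalIntegrable
    rw [hui]
    exact (hk.mul continuousOn_const).add (continuousOn_const.mul hw'c.neg)
  have hrest : ‖∫ x in a..b, (deriv u x * (E x * (w x : ℂ)) + E x * u x * (w' x : ℂ))‖ ≤
      ∫ x in a..b, (k x * w a + M * (- w' x)) := by
    apply intervalIntegral.norm_integral_le_of_norm_le hab _ hI4
    filter_upwards [ae1] with x hx hxab
    have hxc : x ∈ Icc a b := Ioc_subset_Icc_self hxab
    refine (norm_add_le _ _).trans (add_le_add ?_ ?_)
    · rw [norm_mul, norm_mul, Complex.norm_real, Real.norm_eq_abs, abs_of_nonneg (hw0 x hxc)]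
      have : ‖E x‖ * w x ≤ w a := by nlinarith [hE1 x, hw0 x hxc, hwa x hxc, norm_nonneg (E x)]
      exact mul_le_mul (hx hxab) this (mul_nonneg (norm_nonneg _) (hw0 x hxc)) (hk0 x hxc)
    · rw [norm_mul, norm_mul, Complex.norm_real, Real.norm_eq_abs, abs_of_nonpos (hw' x hxc)]
      apply mul_le_mul_of_nonneg_right _ (by linarith [hw' x hxc])
      have := mul_le_mul (hE1 x) (huM x hxc) (norm_nonneg _) zero_le_one
      linarith
  have hval : ∫ x in a..b, (k x * w a + M * (- w' x)) = (∫ x in a..b, k x) * w a + M * (w a - w b) := by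
    have hwI : IntervalIntegrable w' volume a b := ContinuousOn.intervalIntegrable (by rwa [hui])
    have hkI : IntervalIntegrable k volume a b := ContinuousOn.intervalIntegrable (by rwa [hui])
    have hnI : IntervalIntegrable (fun x => M * (- w' x)) volume a b := hwI.neg.const_mul M
    rw [intervalIntegral.integral_add (hkI.mul_const _) hnI,
      intervalIntegral.integral_mul_const, intervalIntegral.integral_const_mul,
      intervalIntegral.integral_neg, intervalIntegral.integral_eq_sub_of_hasDerivAt (f := w) _ hwI]
    · ring
    · rw [hui]; exact hw
  have hbd : ∀ x ∈ Icc a b, ‖E x * u x * (w x : ℂ)‖ ≤ M * w x := by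
    intro x hxc
    rw [norm_mul, norm_mul, Complex.norm_real, Real.norm_eq_abs, abs_of_nonneg (hw0 x hxc)]
    apply mul_le_mul_of_nonneg_right _ (hw0 x hxc)
    have := mul_le_mul (hE1 x) (huM x hxc) (norm_nonneg _) zero_le_one
    linarith
  have e1 := hbd a ⟨le_rfl, hab⟩
  have e2 := hbd b ⟨hab, le_rfl⟩
  have e3 := hwa b ⟨hab, le_rfl⟩
  have e4 := hw0 a ⟨le_rfl, hab⟩
  have e5 := hw0 b ⟨hab, le_rfl⟩
  rw [eq_sub_of_add_eq key]
  refine (norm_sub_le _ _).trans ?_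
  refine (add_le_add (norm_sub_le _ _) hrest).trans ?_
  rw [hval]
  nlinarith [mul_le_mul_of_nonneg_right hkM e4, mul_nonneg hM e4, mul_nonneg hM e5]

lemma osc_w_deriv {ε x : ℝ} (hx : ε < x) :
    HasDerivAt (fun y => (√(y - ε))⁻¹) (-(1 / (2 * √(x - ε))) / √(x - ε) ^ 2) x := by
  have h : HasDerivAt (fun y => √(y - ε)) (1 / (2 * √(x - ε))) x :=
    ((hasDerivAt_id x).sub_const ε).sqrt (by simp; linarith)
  exact h.inv (Real.sqrt_pos.2 (by linarith)).ne'

lemma osc_exp_deriv (t x : ℝ) :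
    HasDerivAt (fun y : ℝ => Complex.exp (Complex.I * ((t * y^2 : ℝ) : ℂ)))
      (2 * Complex.I * t * x * Complex.exp (Complex.I * ((t * x^2 : ℝ) : ℂ))) x := by
  have h : HasDerivAt (fun y : ℝ => t * y ^ 2) (t * (2 * x)) x := by
    simpa using (hasDerivAt_pow 2 x).const_mul t
  convert (h.ofReal_comp.const_mul Complex.I).cexp using 1
  push_cast
  ring

lemma osc_exp_norm (s : ℝ) : ‖Complex.exp (Complex.I * (s : ℂ))‖ = 1 := by
  rw [mul_comm]; exact Complex.norm_exp_ofReal_mul_I s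

/-- Specialised integration by parts bound. -/
lemma osc_far {a b M t ε : ℝ} (ht : 0 < t) (hε : ε < a) (hab : a ≤ b) (u : ℝ → ℂ) (k : ℝ → ℝ)
    (huc : ContinuousOn u (Icc a b)) (hud : ∀ x ∈ Ioo a b, x ≠ 0 → DifferentiableAt ℝ u x)
    (huM : ∀ x ∈ Icc a b, ‖u x‖ ≤ M)
    (hk : ContinuousOn k (Icc a b)) (huk : ∀ x ∈ Ioo a b, x ≠ 0 → ‖deriv u x‖ ≤ k x)
    (hk0 : ∀ x ∈ Icc a b, 0 ≤ k x)
    (hkM : ∫ x in a..b, k x ≤ M) :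
    ‖∫ x in a..b, Complex.exp (Complex.I * ((t * x^2 : ℝ) : ℂ)) * (x * u x) /
      ((√(x - ε) : ℝ) : ℂ)‖ ≤ 2 * M / (t * √(a - ε)) := by
  have hpos : ∀ x ∈ Icc a b, 0 < √(x - ε) := fun x hx =>
    Real.sqrt_pos.2 (by linarith [hx.1])
  have h := osc_ibp hab (fun y : ℝ => Complex.exp (Complex.I * ((t * y^2 : ℝ) : ℂ)))
    (fun x => 2 * Complex.I * t * x * Complex.exp (Complex.I * ((t * x^2 : ℝ) : ℂ))) u
    (fun y => (√(y - ε))⁻¹) (fun x => -(1 / (2 * √(x - ε))) / √(x - ε) ^ 2) k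
    (osc_exp_deriv t) (by fun_prop) (fun x => (osc_exp_norm _).le) huc hud huM hk huk hk0 hkM
    (fun x hx => osc_w_deriv (by linarith [hx.1]))
    (by
      have : ContinuousOn (fun x => √(x - ε)) (Icc a b) := by fun_prop
      refine ContinuousOn.div (ContinuousOn.neg (ContinuousOn.div continuousOn_const
        (continuousOn_const.mul this) ?_)) (this.pow 2) ?_
      · intro x hx; have := hpos x hx; positivity
      · intro x hx; have := hpos x hx; positivity)
    (by
      intro x hx
      have := hpos x hx
      rw [neg_div]
      have : 0 ≤ 1 / (2 * √(x - ε)) / √(x - ε) ^ 2 := by positivity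
      linarith)
    (fun x hx => by positivity)
  have heq : (∫ x in a..b, 2 * Complex.I * t * x * Complex.exp (Complex.I * ((t * x^2 : ℝ) : ℂ))
      * u x * (((√(x - ε))⁻¹ : ℝ) : ℂ)) = (2 * Complex.I * t) *
      ∫ x in a..b, Complex.exp (Complex.I * ((t * x^2 : ℝ) : ℂ)) * (x * u x) /
      ((√(x - ε) : ℝ) : ℂ) := by
    rw [← intervalIntegral.integral_const_mul]
    congr 1
    funext x
    push_cast
    ring
  rw [heq, norm_mul] at h
  have hn : ‖2 * Complex.I * (t : ℂ)‖ = 2 * t := by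
    simp [abs_of_pos ht]
  rw [hn] at h
  have ha : 0 < √(a - ε) := hpos a ⟨le_rfl, hab⟩
  rw [le_div_iff₀ (by positivity)]
  have h2 := mul_le_mul_of_nonneg_right h ha.le
  rw [mul_assoc (4 * M), inv_mul_cancel₀ ha.ne'] at h2
  nlinarith

lemma osc_w_int (ε a b : ℝ) : IntervalIntegrable (fun y => (√(y - ε))⁻¹) volume a b := by
  have h : IntervalIntegrable (fun y : ℝ => (√y)⁻¹) volume (a - ε) (b - ε) := by
    have h0 := (intervalIntegral.intervalIntegrable_rpow' (a := a - ε) (b := b - ε)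
      (r := -(1/2)) (by norm_num)).norm
    refine h0.mono_fun' (by fun_prop) ?_
    filter_upwards with x
    rcases le_or_gt 0 x with hx | hx
    · rw [Real.norm_eq_abs, Real.norm_eq_abs, Real.rpow_neg hx, Real.sqrt_eq_rpow]
    · rw [Real.sqrt_eq_zero_of_nonpos hx.le]; simp
  simpa using h.comp_sub_right ε

lemma osc_w_val {ε η : ℝ} (hη : 0 ≤ η) : ∫ y in ε..(ε + η), (√(y - ε))⁻¹ = 2 * √η := by
  rw [intervalIntegral.integral_comp_sub_right (fun y => (√y)⁻¹)]
  have : ∫ y in (ε - ε)..(ε + η - ε), (√y)⁻¹ = ∫ y in (0:ℝ)..η, y ^ (-(1/2) : ℝ) := by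
    rw [sub_self, add_sub_cancel_left]
    apply intervalIntegral.integral_congr
    intro x hx
    rw [uIcc_of_le hη] at hx
    simp only
    rw [Real.rpow_neg hx.1, Real.sqrt_eq_rpow]
  rw [this, integral_rpow (Or.inl (by norm_num)), Real.sqrt_eq_rpow]
  norm_num
  ring

lemma osc_int (t ε a b : ℝ) (f : ℝ → ℂ) (hf : Continuous f) :
    IntervalIntegrable (fun x : ℝ => Complex.exp (Complex.I * ((t * x^2 : ℝ) : ℂ)) * f x /
      ((√(x - ε) : ℝ) : ℂ)) volume a b := by
  have h : IntervalIntegrable (fun x : ℝ => (((√(x - ε))⁻¹ : ℝ) : ℂ)) volume a b :=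
    ⟨(osc_w_int ε a b).1.ofReal, (osc_w_int ε a b).2.ofReal⟩
  have := h.mul_continuousOn (g := fun x : ℝ => Complex.exp (Complex.I * ((t * x^2 : ℝ) : ℂ)) * f x)
    (by fun_prop)
  refine this.congr ?_
  intro x _
  push_cast
  ring

lemma osc_near {ε η M t : ℝ} (hη : 0 ≤ η) (u : ℝ → ℂ) (huM : ∀ x, ‖u x‖ ≤ M) :
    ‖∫ x in ε..(ε + η), Complex.exp (Complex.I * ((t * x^2 : ℝ) : ℂ)) * (x * u x) /
      ((√(x - ε) : ℝ) : ℂ)‖ ≤ 2 * M * (|ε| + η) * √η := by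
  have h := intervalIntegral.norm_integral_le_of_norm_le (μ := volume) (a := ε) (b := ε + η)
    (f := fun x : ℝ => Complex.exp (Complex.I * ((t * x^2 : ℝ) : ℂ)) * (x * u x) /
      ((√(x - ε) : ℝ) : ℂ)) (g := fun x => ((|ε| + η) * M) * (√(x - ε))⁻¹) (by linarith)
    (by
      filter_upwards with x hx
      rw [norm_div, norm_mul, osc_exp_norm, one_mul, norm_mul, Complex.norm_real, Complex.norm_real,
        Real.norm_eq_abs, Real.norm_eq_abs, abs_of_nonneg (Real.sqrt_nonneg _), div_eq_mul_inv]
      apply mul_le_mul_of_nonneg_right _ (by positivity)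
      apply mul_le_mul _ (huM x) (norm_nonneg _) (by positivity)
      rw [abs_le]
      constructor <;> linarith [hx.1, hx.2, neg_abs_le ε, le_abs_self ε])
    ((osc_w_int _ _ _).const_mul _)
  rw [intervalIntegral.integral_const_mul, osc_w_val hη] at h
  linarith

lemma osc_G_exists (x : ℝ) : ∃ G : ℂ, Tendsto
        (fun R : ℝ => ∫ σ in x..R,
          Complex.exp (Complex.I * ((σ^2 : ℝ) : ℂ)) / ((Real.sqrt (σ - x) : ℝ) : ℂ))
        atTop (nhds G) := by
  have hint : ∀ a b : ℝ, IntervalIntegrable (fun σ : ℝ => Complex.exp (Complex.I * ((σ^2 : ℝ) : ℂ)) /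
      ((Real.sqrt (σ - x) : ℝ) : ℂ)) volume a b := by
    intro a b
    simpa using osc_int 1 x a b (fun _ => 1) continuous_const
  have far : ∀ a b : ℝ, |x| + 1 ≤ a → a ≤ b → ‖∫ σ in a..b,
      Complex.exp (Complex.I * ((σ^2 : ℝ) : ℂ)) / ((Real.sqrt (σ - x) : ℝ) : ℂ)‖ ≤ 2 / a := by
    intro a b ha hab
    have ha0 : 0 < a := by linarith [abs_nonneg x]
    have hxa : 1 ≤ a - x := by linarith [le_abs_self x]
    have hk : ∫ y in a..b, 1 / y ^ 2 = 1 / a - 1 / b := by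
      have := integral_eq_of_hasDerivAt_off_countable_of_le (fun y : ℝ => - y⁻¹) (fun y => 1 / y^2)
        hab (countable_empty)
        (by
          refine (ContinuousOn.inv₀ continuousOn_id ?_).neg
          intro y hy; have := hy.1; simp; linarith)
        (by
          rintro y ⟨hy, -⟩
          have := (hasDerivAt_inv (x := y) (by linarith [hy.1])).neg
          rw [neg_neg, ← one_div] at this
          exact this)
        (by
          apply ContinuousOn.intervalIntegrable
          rw [uIcc_of_le hab]
          refine ContinuousOn.div continuousOn_const (by fun_prop) ?_
          intro y hy; have : 0 < y := by linarith [hy.1]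
          positivity)
      rw [this]; ring
    have h := osc_far (a := a) (b := b) (M := 1 / a) (t := 1) (ε := x) one_pos (by linarith) hab
      (fun y => ((y⁻¹ : ℝ) : ℂ)) (fun y => 1 / y^2)
      (by
        refine Complex.continuous_ofReal.comp_continuousOn (ContinuousOn.inv₀ continuousOn_id ?_)
        intro y hy; have := hy.1; simp; linarith)
      (by
        intro y hy hy0
        exact (hasDerivAt_inv hy0).ofReal_comp.differentiableAt)
      (by
        intro y hy
        have : 0 < y := by linarith [hy.1]
        rw [Complex.norm_real, Real.norm_eq_abs, abs_of_pos (by positivity), ← one_div]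
        exact one_div_le_one_div_of_le ha0 hy.1)
      (by
        refine ContinuousOn.div continuousOn_const (by fun_prop) ?_
        intro y hy; have : 0 < y := by linarith [hy.1]
        positivity)
      (by
        intro y hy hy0
        rw [(hasDerivAt_inv hy0).ofReal_comp.deriv, Complex.norm_real, Real.norm_eq_abs, abs_neg,
          abs_of_nonneg (by positivity), one_div])
      (fun y hy => by positivity)
      (by
        rw [hk]
        have : 0 < 1 / b := by have : 0 < b := by linarith
                               positivity
        linarith)
    have heq : (∫ σ in a..b, Complex.exp (Complex.I * ((σ^2 : ℝ) : ℂ)) /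
        ((Real.sqrt (σ - x) : ℝ) : ℂ)) =
        ∫ y in a..b, Complex.exp (Complex.I * ((1 * y^2 : ℝ) : ℂ)) * (y * ((y⁻¹ : ℝ) : ℂ)) /
        ((√(y - x) : ℝ) : ℂ) := by
      apply intervalIntegral.integral_congr
      intro y hy
      rw [uIcc_of_le hab] at hy
      have : (y : ℂ) ≠ 0 := by
        exact_mod_cast (show y ≠ 0 by linarith [hy.1])
      simp only [one_mul]
      push_cast
      rw [mul_inv_cancel₀ this, mul_one]
    rw [heq]
    refine h.trans ?_
    have h1 : 1 ≤ √(a - x) := by rw [Real.one_le_sqrt]; exact hxa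
    rw [one_mul, mul_one_div]
    exact div_le_self (by positivity) h1
  have hc : CauchySeq (fun R : ℝ => ∫ σ in x..R,
          Complex.exp (Complex.I * ((σ^2 : ℝ) : ℂ)) / ((Real.sqrt (σ - x) : ℝ) : ℂ)) := by
    rw [Metric.cauchySeq_iff']
    intro e he
    refine ⟨max (|x| + 1) (4 / e), fun n hn => ?_⟩
    set N := max (|x| + 1) (4 / e) with hN
    have hN1 : |x| + 1 ≤ N := le_max_left _ _
    have hN2 : 4 / e ≤ N := le_max_right _ _
    have hN0 : 0 < N := by linarith [abs_nonneg x]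
    rw [dist_eq_norm, intervalIntegral.integral_interval_sub_left (hint _ _) (hint _ _)]
    refine (far N n hN1 hn).trans_lt ?_
    rw [div_lt_iff₀ hN0]
    rw [div_le_iff₀ he] at hN2
    linarith
  exact cauchySeq_tendsto_of_complete hc

lemma osc_scale {t : ℝ} (ht : 0 < t) (ε R : ℝ) :
    ((t ^ (-(1:ℝ)/4) : ℝ) : ℂ) * (∫ σ in (√t * ε)..(√t * R),
      Complex.exp (Complex.I * ((σ^2 : ℝ) : ℂ)) / ((Real.sqrt (σ - √t * ε) : ℝ) : ℂ)) =
    ∫ σ in ε..R, Complex.exp (Complex.I * ((t * σ^2 : ℝ) : ℂ)) / ((Real.sqrt (σ - ε) : ℝ) : ℂ) := by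
  rw [← intervalIntegral.smul_integral_comp_mul_left, ← intervalIntegral.integral_smul,
    ← intervalIntegral.integral_const_mul]
  congr 1
  funext x
  have h1 : √t * x - √t * ε = √t * (x - ε) := by ring
  rw [h1, Real.sqrt_mul (Real.sqrt_nonneg t), mul_pow, Real.sq_sqrt ht.le]
  have h2 : t ^ (-(1:ℝ)/4) * √t = √(√t) := by
    rw [Real.sqrt_eq_rpow, Real.sqrt_eq_rpow, ← Real.rpow_mul ht.le, ← Real.rpow_add ht]
    norm_num
  have h3 : ((√√t : ℝ) : ℂ) ≠ 0 := by
    have : 0 < √√t := by positivity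
    exact_mod_cast this.ne'
  rw [Complex.real_smul, ← mul_assoc, ← Complex.ofReal_mul, h2, Complex.ofReal_mul (√√t),
    mul_div_assoc', mul_div_mul_left _ _ h3]

lemma osc_phi (χ : ℝ → ℂ) (hχ : ContDiff ℝ (⊤ : ℕ∞) χ) (hs : HasCompactSupport χ) :
    Continuous (dslope χ 0) ∧ (∀ x, x ≠ 0 → DifferentiableAt ℝ (dslope χ 0) x) ∧
    ∃ M K : ℝ, (∀ x, ‖dslope χ 0 x‖ ≤ M) ∧ 0 ≤ K ∧
      ∀ x, x ≠ 0 → ‖deriv (dslope χ 0) x‖ ≤ K * (1 / (1 + x ^ 2)) := by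
  have hd : Differentiable ℝ χ := hχ.differentiable (by simp)
  have hχ1 : ContDiff ℝ (⊤ : ℕ∞) (deriv χ) := by
    have := (contDiff_infty_iff_deriv (f := χ)).1 hχ
    exact this.2
  have hd1 : Differentiable ℝ (deriv χ) := hχ1.differentiable (by simp)
  have hc2 : Continuous (deriv (deriv χ)) := by
    have := (contDiff_infty_iff_deriv (f := deriv χ)).1 hχ1
    exact this.2.continuous
  obtain ⟨A, hA⟩ := hs.exists_bound_of_continuous hd.continuous
  obtain ⟨B, hB⟩ := hs.deriv.exists_bound_of_continuous hd1.continuous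
  obtain ⟨D, hD⟩ := hs.deriv.deriv.exists_bound_of_continuous hc2
  have hsx : HasCompactSupport (fun x : ℝ => (x : ℂ) * deriv χ x) := hs.deriv.mul_left
  obtain ⟨N, hN⟩ := hsx.exists_bound_of_continuous
    (Complex.continuous_ofReal.mul hd1.continuous)
  have hA0 : 0 ≤ A := (norm_nonneg _).trans (hA 0)
  have hD0 : 0 ≤ D := (norm_nonneg _).trans (hD 0)
  have hN0 : 0 ≤ N := (norm_nonneg _).trans (hN 0)
  refine ⟨?_, fun x hx => (differentiableAt_dslope_of_ne hx).2 (hd x), B, D + (N + 2 * A), ?_,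
    by positivity, ?_⟩
  · rw [← continuousOn_univ]
    exact (continuousOn_dslope univ_mem).2 ⟨hd.continuous.continuousOn, hd 0⟩
  · intro x
    by_cases hx : x = 0
    · rw [hx, dslope_same]; exact hB 0
    · have h1 := (convex_univ (𝕜 := ℝ) (E := ℝ)).norm_image_sub_le_of_norm_deriv_le (f := χ) (C := B)
        (x := 0) (y := x) (fun y _ => hd y) (fun y _ => hB y) (mem_univ _) (mem_univ _)
      rw [← sub_smul_dslope, norm_smul, mul_comm B] at h1
      exact le_of_mul_le_mul_left h1 (by simpa using hx)
  · intro x hx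
    have hxC : (x : ℂ) ≠ 0 := by exact_mod_cast hx
    have hev : dslope χ 0 =ᶠ[nhds x] fun y : ℝ => (χ y - χ 0) / (y : ℂ) := by
      have : ∀ᶠ y in nhds x, y ≠ 0 := isOpen_ne.mem_nhds hx
      filter_upwards [this] with y hy
      have hyC : (y : ℂ) ≠ 0 := by exact_mod_cast hy
      rw [← sub_smul_dslope, sub_zero, Complex.real_smul]
      field_simp
    have hder : HasDerivAt (fun y : ℝ => (χ y - χ 0) / (y : ℂ))
        ((deriv χ x * x - (χ x - χ 0) * 1) / (x : ℂ) ^ 2) x := by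
      have h1 := (hd x).hasDerivAt.sub_const (χ 0)
      have h2 : HasDerivAt (fun y : ℝ => (y : ℂ)) 1 x := (hasDerivAt_id x).ofReal_comp
      exact h1.div h2 hxC
    rw [hev.deriv_eq, hder.deriv, norm_div, norm_pow, Complex.norm_real, Real.norm_eq_abs, sq_abs,
      mul_one]
    set h : ℝ → ℂ := fun y => deriv χ y * y - (χ y - χ 0) with hh
    have hx2 : 0 < x ^ 2 := by positivity
    have b1 : ‖h x‖ ≤ D * x ^ 2 := by
      have := (convex_uIcc (0:ℝ) x).norm_image_sub_le_of_norm_hasDerivWithin_le (f := h)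
        (f' := fun y => deriv (deriv χ) y * y) (C := D * |x|) (x := 0) (y := x)
        (by
          intro y _
          have h2 : HasDerivAt (fun y : ℝ => (y : ℂ)) 1 y := (hasDerivAt_id y).ofReal_comp
          have h3 := ((hd1 y).hasDerivAt.mul h2).sub ((hd y).hasDerivAt.sub_const (χ 0))
          refine HasDerivAt.hasDerivWithinAt ?_
          exact h3.congr_deriv (by ring))
        (by
          intro y hy
          rw [norm_mul, Complex.norm_real, Real.norm_eq_abs]
          have : |y| ≤ |x| := by simpa using abs_sub_left_of_mem_uIcc hy
          exact mul_le_mul (hD y) this (abs_nonneg _) hD0)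
        left_mem_uIcc right_mem_uIcc
      have h0 : h 0 = 0 := by simp [hh]
      rw [h0, sub_zero, sub_zero, Real.norm_eq_abs, mul_assoc, abs_mul_abs_self] at this
      rw [pow_two]; exact this
    have b2 : ‖h x‖ ≤ N + 2 * A := by
      refine (norm_sub_le _ _).trans ?_
      have e1 := hN x
      rw [mul_comm] at e1
      have e2 := norm_sub_le (χ x) (χ 0)
      linarith [hA x, hA 0]
    change ‖h x‖ / x ^ 2 ≤ _
    rw [mul_one_div, div_le_div_iff₀ hx2 (by positivity)]
    nlinarith

lemma osc_main {t ε η M K R : ℝ} (ht : 0 < t) (hη : 0 < η) (hR : ε + η ≤ R) (φ : ℝ → ℂ)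
    (hc : Continuous φ) (hd : ∀ x, x ≠ 0 → DifferentiableAt ℝ φ x)
    (hM : ∀ x, ‖φ x‖ ≤ M) (hK : 0 ≤ K) (hKM : K * Real.pi ≤ M)
    (hφ' : ∀ x, x ≠ 0 → ‖deriv φ x‖ ≤ K * (1 / (1 + x ^ 2))) :
    ‖∫ x in ε..R, Complex.exp (Complex.I * ((t * x^2 : ℝ) : ℂ)) * (x * φ x) /
      ((√(x - ε) : ℝ) : ℂ)‖ ≤ 2 * M * (|ε| + η) * √η + 2 * M / (t * √η) := by
  have hcc : Continuous fun x : ℝ => (x : ℂ) * φ x := Complex.continuous_ofReal.mul hc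
  rw [← intervalIntegral.integral_add_adjacent_intervals (b := ε + η)
    (osc_int t ε _ _ _ hcc) (osc_int t ε _ _ _ hcc)]
  refine (norm_add_le _ _).trans (add_le_add (osc_near hη.le φ hM) ?_)
  have := osc_far (a := ε + η) (b := R) (M := M) (t := t) (ε := ε) ht (by linarith) hR φ
    (fun x => K * (1 / (1 + x ^ 2))) hc.continuousOn (fun x _ hx => hd x hx) (fun x _ => hM x)
    (by
      apply Continuous.continuousOn
      refine continuous_const.mul (Continuous.div continuous_const (by fun_prop) ?_)
      intro x; positivity)
    (fun x _ hx => hφ' x hx) (fun x _ => by positivity)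
    (by
      rw [intervalIntegral.integral_const_mul, integral_one_div_one_add_sq]
      refine le_trans (mul_le_mul_of_nonneg_left ?_ hK) hKM
      linarith [Real.arctan_lt_pi_div_two R, Real.neg_pi_div_two_lt_arctan (ε + η)])
  rwa [add_sub_cancel_left] at this

/-- For a smooth compactly supported `χ`, the oscillatory integral
`∫_ε^∞ e^{itσ²} χ(σ) (σ-ε)^{-1/2} dσ` equals `χ(0) t^{-1/4} G₂(√t ε)` up to an error
`O(t^{-3/4})` if `|√t ε| < 1` and `O(√(|ε|/t))` if `|√t ε| > 1`, where
`G₂(x) = ∫_x^∞ e^{iσ²} (σ-x)^{-1/2} dσ`. -/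
theorem oscillatory_integral_quadratic_sqrt_singularity (χ : ℝ → ℂ)
    (hχ : ContDiff ℝ (⊤ : ℕ∞) χ) (hχsupp : HasCompactSupport χ) :
    ∃ G₂ : ℝ → ℂ,
      (∀ x : ℝ, Tendsto
        (fun R : ℝ => ∫ σ in x..R,
          Complex.exp (Complex.I * ((σ^2 : ℝ) : ℂ)) / ((Real.sqrt (σ - x) : ℝ) : ℂ))
        atTop (nhds (G₂ x))) ∧
      ∃ C : ℝ, ∀ t : ℝ, 1 ≤ t → ∀ ε : ℝ,
        (|Real.sqrt t * ε| < 1 →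
          ‖(∫ σ in Set.Ioi ε,
              Complex.exp (Complex.I * ((t * σ^2 : ℝ) : ℂ)) * χ σ /
                ((Real.sqrt (σ - ε) : ℝ) : ℂ)) -
            χ 0 * ((t ^ (-(1:ℝ)/4) : ℝ) : ℂ) * G₂ (Real.sqrt t * ε)‖ ≤
              C * t ^ (-(3:ℝ)/4)) ∧
        (1 < |Real.sqrt t * ε| →
          ‖(∫ σ in Set.Ioi ε,
              Complex.exp (Complex.I * ((t * σ^2 : ℝ) : ℂ)) * χ σ /
                ((Real.sqrt (σ - ε) : ℝ) : ℂ)) -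
            χ 0 * ((t ^ (-(1:ℝ)/4) : ℝ) : ℂ) * G₂ (Real.sqrt t * ε)‖ ≤
              C * Real.sqrt (|ε| / t)) := by
  choose G hG using osc_G_exists
  obtain ⟨hc, hd, M₀, K, hM₀, hK, hφ'⟩ := osc_phi χ hχ hχsupp
  set M := max M₀ (K * Real.pi) with hMdef
  have hM : ∀ x, ‖dslope χ 0 x‖ ≤ M := fun x => (hM₀ x).trans (le_max_left _ _)
  have hKM : K * Real.pi ≤ M := le_max_right _ _
  have hM0 : 0 ≤ M := (norm_nonneg _).trans (hM 0)
  have main : ∀ t : ℝ, 1 ≤ t → ∀ ε η : ℝ, 0 < η →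
      ‖(∫ σ in Set.Ioi ε, Complex.exp (Complex.I * ((t * σ^2 : ℝ) : ℂ)) * χ σ /
          ((Real.sqrt (σ - ε) : ℝ) : ℂ)) -
        χ 0 * ((t ^ (-(1:ℝ)/4) : ℝ) : ℂ) * G (Real.sqrt t * ε)‖ ≤
      2 * M * (|ε| + η) * √η + 2 * M / (t * √η) := by
    intro t ht ε η hη
    have ht0 : 0 < t := by linarith
    have hlim : Tendsto (fun R : ℝ => (∫ σ in Set.Ioi ε,
        Complex.exp (Complex.I * ((t * σ^2 : ℝ) : ℂ)) * χ σ / ((Real.sqrt (σ - ε) : ℝ) : ℂ)) -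
        χ 0 * (((t ^ (-(1:ℝ)/4) : ℝ) : ℂ) * (∫ σ in (√t * ε)..(√t * R),
          Complex.exp (Complex.I * ((σ^2 : ℝ) : ℂ)) / ((Real.sqrt (σ - √t * ε) : ℝ) : ℂ))))
        atTop (nhds ((∫ σ in Set.Ioi ε,
        Complex.exp (Complex.I * ((t * σ^2 : ℝ) : ℂ)) * χ σ / ((Real.sqrt (σ - ε) : ℝ) : ℂ)) -
        χ 0 * (((t ^ (-(1:ℝ)/4) : ℝ) : ℂ) * G (√t * ε)))) := by
      refine tendsto_const_nhds.sub (tendsto_const_nhds.mul (tendsto_const_nhds.mul ?_))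
      exact (hG (√t * ε)).comp (tendsto_id.const_mul_atTop (Real.sqrt_pos.2 ht0))
    rw [mul_assoc]
    refine le_of_tendsto hlim.norm ?_
    obtain ⟨r, hr⟩ := hχsupp.isCompact.isBounded.subset_closedBall 0
    filter_upwards [eventually_ge_atTop (ε + η), eventually_ge_atTop r] with R hR1 hR2
    rw [osc_scale ht0]
    have h1 : (∫ σ in Set.Ioi ε, Complex.exp (Complex.I * ((t * σ^2 : ℝ) : ℂ)) * χ σ /
          ((Real.sqrt (σ - ε) : ℝ) : ℂ)) = ∫ σ in ε..R,
          Complex.exp (Complex.I * ((t * σ^2 : ℝ) : ℂ)) * χ σ / ((Real.sqrt (σ - ε) : ℝ) : ℂ) := by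
      rw [intervalIntegral.integral_of_le (by linarith)]
      apply setIntegral_eq_of_subset_of_forall_sdiff_eq_zero measurableSet_Ioi Ioc_subset_Ioi_self
      rintro x ⟨hx1, hx2⟩
      have hxR : R < x := by
        by_contra h
        exact hx2 ⟨hx1, not_lt.1 h⟩
      have : χ x = 0 := by
        by_contra h
        have := hr (subset_tsupport χ h)
        rw [mem_closedBall_zero_iff, Real.norm_eq_abs] at this
        linarith [le_abs_self x]
      rw [this]; simp
    have hi1 := osc_int t ε ε R χ hχ.continuous
    have hi2 := osc_int t ε ε R (fun _ => χ 0) continuous_const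
    rw [h1, ← intervalIntegral.integral_const_mul]
    have h2 : (∫ σ in ε..R, χ 0 * (Complex.exp (Complex.I * ((t * σ^2 : ℝ) : ℂ)) /
        ((Real.sqrt (σ - ε) : ℝ) : ℂ))) = ∫ σ in ε..R,
          Complex.exp (Complex.I * ((t * σ^2 : ℝ) : ℂ)) * χ 0 / ((Real.sqrt (σ - ε) : ℝ) : ℂ) := by
      congr 1; funext x; ring
    rw [h2, ← intervalIntegral.integral_sub hi1 hi2]
    have h3 := osc_main ht0 hη hR1 (dslope χ 0) hc hd hM hK hKM hφ'
    refine le_of_eq_of_le ?_ h3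
    congr 2
    funext x
    have : χ x - χ 0 = (x : ℂ) * dslope χ 0 x := by
      rw [← sub_smul_dslope, sub_zero, Complex.real_smul]
    rw [← this]; ring
  refine ⟨G, hG, 6 * M, fun t ht ε => ⟨fun h => ?_, fun h => ?_⟩⟩
  · have ht0 : 0 < t := by linarith
    have hs : 0 < √t := Real.sqrt_pos.2 ht0
    have hη : 0 < (√t)⁻¹ := by positivity
    refine (main t ht ε (√t)⁻¹ hη).trans ?_
    rw [abs_mul, abs_of_pos hs] at h
    have hε : |ε| ≤ (√t)⁻¹ := by
      rw [← one_div, le_div_iff₀ hs]; linarith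
    have hq : t ^ (-(3:ℝ)/4) = (√t)⁻¹ * √(√t)⁻¹ := by
      rw [Real.sqrt_eq_rpow, Real.sqrt_eq_rpow, ← Real.rpow_neg ht0.le, ← Real.rpow_mul ht0.le,
        ← Real.rpow_add ht0]
      norm_num
    set η := (√t)⁻¹ with hηd
    have hts : t = (η ^ 2)⁻¹ := by rw [hηd, inv_pow, inv_inv, Real.sq_sqrt ht0.le]
    have hsη : 0 < √η := Real.sqrt_pos.2 hη
    have e2 : 2 * M / (t * √η) = 2 * M * (η * √η) := by
      rw [hts]
      field_simp
      rw [Real.sq_sqrt hη.le]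
    rw [hq, e2]
    have : 2 * M * (|ε| + η) * √η ≤ 2 * M * (η + η) * √η := by gcongr
    linarith
  · have ht0 : 0 < t := by linarith
    have hs : 0 < √t := Real.sqrt_pos.2 ht0
    rw [abs_mul, abs_of_pos hs] at h
    have hε : 0 < |ε| := by
      by_contra h'
      nlinarith [not_lt.1 h']
    set e := |ε| with he
    have hη : 0 < (t * e)⁻¹ := by positivity
    refine (main t ht ε (t * e)⁻¹ hη).trans ?_
    rw [← he]
    set η := (t * e)⁻¹ with hηd
    have hsη : 0 < √η := Real.sqrt_pos.2 hη
    have hle : η ≤ e := by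
      rw [hηd, ← one_div, div_le_iff₀ (by positivity)]
      have h4 : e * (t * e) = (√t * e) ^ 2 := by rw [mul_pow, Real.sq_sqrt ht0.le]; ring
      rw [h4]
      nlinarith
    have e1 : √(e / t) = e * √η := by
      have : e / t = e ^ 2 * η := by rw [hηd]; field_simp
      rw [this, Real.sqrt_mul (by positivity), Real.sqrt_sq hε.le]
    have e2 : 2 * M / (t * √η) = 2 * M * (e * √η) := by
      have : t * e * η = 1 := mul_inv_cancel₀ (by positivity)
      rw [div_eq_iff (by positivity)]
      have h2 := Real.mul_self_sqrt hη.le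
      linear_combination (-2 * M) * this - 2 * M * t * e * h2
    rw [e1, e2]
    have : 2 * M * (e + η) * √η ≤ 2 * M * (e + e) * √η := by gcongr
    linarith
end
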